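/- For every alphabet Σ of size σ ≥ 2, every n ∈ ℕ, every integer ℓ ≥ 0, and every real t with 0 ≤ t ≤ 0.1·ln σ, if S ∈ Σⁿ is chosen uniformly at random, then P[n − L(S) ≥ ℓ] ≤ C(t)·e^{−tℓ}, where C(t) = (σ³ − σ²e^{2t})/(σ³ − 2σ²e^{2t} + e^{4t}). -/

import Mathlib

/-!
The proof bounds the exponential moment `E[e^{t(n - L(S))}]` by `C(t)` and applies Markov's
inequality.

If `S` is unbordered then `n - L(S) = 0`. Otherwise let `k` be the length of its shortest border
`U`. The two occurrences of `U` do not overlap, since an overlap would be a shorter border, so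
`S = U V U` (`exists_decomp`). As `V` is a factor of `S`, `n - L(S) ≤ 2k + (|V| - L(V))`. If
`k ≥ 2`, the first and last letters of `U` differ, as otherwise `S` would have a border of length
`1`; hence there are at most `(σ - 1) σ^{k-1}` choices for `U` (and `σ` choices if `k = 1`).

With `q = e^{2t}` and `x = q / σ`, summing over `k` gives
`E_n ≤ 1 + x E_{n-2} + ∑_{k ≥ 2} (1 - 1/σ) x^k E_{n-2k}`, and
`M = x + (1 - 1/σ) x² / (1 - x)` satisfies `C(t) = 1 / (1 - M)`, so `E_n ≤ 1 + M C(t) = C(t)` by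
strong induction on `n` (`moment_bound`). The hypothesis `t ≤ 0.1 ln σ`, that is `q⁵ ≤ σ`,
guarantees that the denominator of `C(t)` is positive (`denom_pos`).
-/

open Finset

/-- `S` has a border of length `ℓ`: `1 ≤ ℓ ≤ |S|` and the length-`ℓ` prefix of `S`
equals its length-`ℓ` suffix. -/
def HasBorder {α : Type*} (S : List α) (ℓ : ℕ) : Prop :=
  1 ≤ ℓ ∧ ℓ ≤ S.length ∧ S.take ℓ = S.drop (S.length - ℓ)

/-- A string is unbordered if it has no proper border (no border of length `< |S|`). -/
def Unbordered {α : Type*} (S : List α) : Prop :=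
  ∀ ℓ, ℓ < S.length → ¬ HasBorder S ℓ

/-- `maxUnb S` is `L(S)`: the maximum length of (nonempty) unbordered factors of `S`. -/
noncomputable def maxUnb {α : Type*} (S : List α) : ℕ :=
  sSup {k | ∃ T, T ≠ [] ∧ T <:+: S ∧ Unbordered T ∧ T.length = k}

/-- `p > 0` is a period of `T` if `T[i] = T[i+p]` whenever both indices are valid. -/
def IsPeriod {α : Type*} (T : List α) (p : ℕ) : Prop :=
  0 < p ∧ ∀ (i : ℕ) (h : i + p < T.length),
    T[i]'(Nat.lt_of_le_of_lt (Nat.le_add_right i p) h) = T[i + p]'h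

/-- `per T` is the shortest period of `T`. -/
noncomputable def per {α : Type*} (T : List α) : ℕ := sInf {p | IsPeriod T p}

/-- `borderF S` is `F(S)`: the length of the shortest border of `S`. -/
noncomputable def borderF {α : Type*} (S : List α) : ℕ := sInf {ℓ | HasBorder S ℓ}

/-- `substr S i j` is the factor `S[i,j]` in 1-based closed-interval indexing. -/
def substr {α : Type*} (S : List α) (i j : ℕ) : List α := (S.drop (i - 1)).take (j + 1 - i)

/-! ### Borders and the decomposition `S = U V U` -/

lemma hasBorder_iff {α : Type*} (S : List α) (ℓ : ℕ) :
    HasBorder S ℓ ↔ 1 ≤ ℓ ∧ ℓ ≤ S.length ∧ ∀ i < ℓ, S[i]? = S[S.length - ℓ + i]? := by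
  unfold HasBorder
  refine and_congr_right fun h1 => and_congr_right fun h2 => ?_
  constructor
  · intro h i hi
    have := congrArg (fun T : List α => T[i]?) h
    simpa [List.getElem?_take, List.getElem?_drop, hi] using this
  · intro h
    apply List.ext_getElem?
    intro i
    by_cases hi : i < ℓ
    · simpa [List.getElem?_take, List.getElem?_drop, hi] using h i hi
    · have : S.length ≤ S.length - ℓ + i := by omega
      simp [List.getElem?_drop, hi, this]

lemma maxUnb_bddAbove {α : Type*} (S : List α) :
    BddAbove {k | ∃ T, T ≠ [] ∧ T <:+: S ∧ Unbordered T ∧ T.length = k} := by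
  refine ⟨S.length, ?_⟩
  rintro k ⟨T, -, hT, -, rfl⟩
  exact hT.length_le

lemma maxUnb_of_unbordered {α : Type*} (S : List α) (h : Unbordered S) :
    S.length ≤ maxUnb S := by
  by_cases hS : S = []
  · simp [hS]
  · exact le_csSup (maxUnb_bddAbove S) ⟨S, hS, List.infix_rfl, h, rfl⟩

lemma maxUnb_mono {α : Type*} {V S : List α} (h : V <:+: S) : maxUnb V ≤ maxUnb S := by
  apply csSup_le'
  rintro k ⟨T, h0, hT, hu, hk⟩
  exact le_csSup (maxUnb_bddAbove S) ⟨T, h0, hT.trans h, hu, hk⟩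

/-- A bordered string is `U V U` with `U` its shortest border; either `U` is a single letter or
its first and last letters differ. -/
lemma exists_decomp {α : Type*} (S : List α) (h : ¬ Unbordered S) :
    ∃ U V : List α, S = U ++ V ++ U ∧
      (U.length = 1 ∨ ∃ a T b, a ≠ b ∧ U = a :: (T ++ [b])) := by
  classical
  have h' : ∃ ℓ, ℓ < S.length ∧ HasBorder S ℓ := by
    simpa [Unbordered] using h
  set k := Nat.find h' with hk
  obtain ⟨hkn, hB⟩ := Nat.find_spec h'
  rw [← hk] at hkn hB
  have hmin : ∀ m < k, 1 ≤ m → ¬ ∀ i < m, S[i]? = S[S.length - m + i]? := by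
    intro m hm h1 hall
    exact Nat.find_min h' hm ⟨by omega, (hasBorder_iff S m).2 ⟨h1, by omega, hall⟩⟩
  obtain ⟨h1, -, hall⟩ := (hasBorder_iff S k).1 hB
  have h2k : 2 * k ≤ S.length := by
    by_contra hlt
    -- An overlap of the two occurrences, of length `2k - n`, would itself be a border.
    refine hmin (2 * k - S.length) (by omega) (by omega) fun i hi => ?_
    rw [hall i (by omega), hall (S.length - k + i) (by omega)]
    congr 1
    omega
  refine ⟨S.take k, (S.drop k).take (S.length - 2 * k), ?_, ?_⟩
  · have e1 : S.take k = (S.drop k).drop (S.length - 2 * k) := by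
      rw [hB.2.2, List.drop_drop]
      congr 1
      omega
    conv_rhs => rw [List.append_assoc]; arg 2; arg 2; rw [e1]
    rw [List.take_append_drop, List.take_append_drop]
  · by_cases hk1 : k = 1
    · left
      rw [List.length_take]
      omega
    · right
      have hne : S[0]? ≠ S[k - 1]? := by
        intro he
        refine hmin 1 (by omega) le_rfl fun i hi => ?_
        obtain rfl : i = 0 := by omega
        rw [he, hall (k - 1) (by omega)]
        congr 1
        omega
      have hlen : (S.take k).length = k := by
        rw [List.length_take]
        omega
      have e0 : (S.take k)[0]? = S[0]? := by
        rw [List.getElem?_take]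
        simp
        omega
      have e1 : (S.take k)[k - 1]? = S[k - 1]? := by
        rw [List.getElem?_take]
        simp
        omega
      rw [← e0, ← e1] at hne
      generalize S.take k = U at hne hlen
      match U, hlen with
      | [], hl => simp at hl; omega
      | a :: U', hl =>
        rcases List.eq_nil_or_concat U' with rfl | ⟨T, b, rfl⟩
        · simp at hl; omega
        · refine ⟨a, T, b, ?_, by simp⟩
          rintro rfl
          apply hne
          have : k = T.length + 2 := by simpa using hl.symm
          simp [this]

/-! ### Words of given length -/

/-- The finite set of words of length `n`, as lists. -/
noncomputable def words (Γ : Type) [Fintype Γ] (n : ℕ) : Finset (List Γ) :=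
  univ.map ⟨fun S : Fin n → Γ => List.ofFn S, List.ofFn_injective⟩

lemma mem_words {Γ : Type} [Fintype Γ] {n : ℕ} {S : List Γ} :
    S ∈ words Γ n ↔ S.length = n := by
  constructor
  · intro h
    obtain ⟨f, -, rfl⟩ := Finset.mem_map.1 h
    simp
  · rintro rfl
    exact Finset.mem_map.2 ⟨S.get, by simp, by simp⟩

lemma card_words (Γ : Type) [Fintype Γ] (n : ℕ) :
    (words Γ n).card = Fintype.card Γ ^ n := by
  simp [words]

open Classical in
/-- A superset of the possible shortest borders of length `k + 1`: all letters if `k = 0`, and the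
words with distinct first and last letters if `k ≥ 1`. -/
noncomputable def cands (Γ : Type) [Fintype Γ] : ℕ → Finset (List Γ)
  | 0 => words Γ 1
  | k + 1 => ((univ : Finset Γ).offDiag ×ˢ words Γ k).image
      fun p => p.1.1 :: (p.2 ++ [p.1.2])

lemma length_of_mem_cands {Γ : Type} [Fintype Γ] {k : ℕ} {U : List Γ}
    (h : U ∈ cands Γ k) : U.length = k + 1 := by
  cases k with
  | zero => exact mem_words.1 h
  | succ k =>
    simp only [cands, Finset.mem_image, Finset.mem_product] at h
    obtain ⟨p, ⟨-, hp⟩, rfl⟩ := h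
    simp [mem_words.1 hp]

/-- Bound on the number of possible shortest borders of length `k + 1`. -/
noncomputable def candCount (s : ℝ) : ℕ → ℝ
  | 0 => s
  | k + 1 => (s ^ 2 - s) * s ^ k

lemma card_cands_le (Γ : Type) [Fintype Γ] (k : ℕ) :
    ((cands Γ k).card : ℝ) ≤ candCount (Fintype.card Γ) k := by
  classical
  cases k with
  | zero => simp [cands, candCount, card_words]
  | succ k =>
    have h : (cands Γ (k + 1)).card ≤
        (Fintype.card Γ * Fintype.card Γ - Fintype.card Γ) * Fintype.card Γ ^ k := by
      refine Finset.card_image_le.trans ?_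
      rw [Finset.card_product, Finset.offDiag_card, card_words, Finset.card_univ]
    have h' : ((cands Γ (k + 1)).card : ℝ) ≤
        ((Fintype.card Γ * Fintype.card Γ - Fintype.card Γ : ℕ) : ℝ) *
          (Fintype.card Γ : ℝ) ^ k := by
      exact_mod_cast h
    rw [Nat.cast_sub (Nat.le_mul_self _)] at h'
    simpa [candCount, sq] using h'

/-! ### The recursion for the exponential moment -/

/-- The summand `e^{t(|S| - L(S))}` of the exponential moment. -/
noncomputable def wt {α : Type*} (t : ℝ) (S : List α) : ℝ :=
  Real.exp (t * ((S.length - maxUnb S : ℕ) : ℝ))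

lemma wt_append_le {α : Type*} {t : ℝ} (ht : 0 ≤ t) (U V : List α) :
    wt t (U ++ V ++ U) ≤ Real.exp (2 * t) ^ U.length * wt t V := by
  have hm : maxUnb V ≤ maxUnb (U ++ V ++ U) := maxUnb_mono ⟨U, U, rfl⟩
  have hn : (U ++ V ++ U).length - maxUnb (U ++ V ++ U)
      ≤ 2 * U.length + (V.length - maxUnb V) := by
    simp only [List.length_append]
    omega
  have hr : (((U ++ V ++ U).length - maxUnb (U ++ V ++ U) : ℕ) : ℝ)
      ≤ 2 * (U.length : ℝ) + ((V.length - maxUnb V : ℕ) : ℝ) := by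
    exact_mod_cast hn
  unfold wt
  rw [← Real.exp_nat_mul, ← Real.exp_add]
  apply Real.exp_le_exp.2
  nlinarith [mul_le_mul_of_nonneg_left hr ht]

lemma sum_biUnion_le {ι β : Type*} [DecidableEq β] {g : β → ℝ} (hg : ∀ b, 0 ≤ g b)
    (s : Finset ι) (f : ι → Finset β) :
    ∑ b ∈ s.biUnion f, g b ≤ ∑ i ∈ s, ∑ b ∈ f i, g b := by
  have h : s.biUnion f = (s.sigma f).image fun p => p.2 := by
    ext b
    simp
  rw [h, ← Finset.sum_sigma (f := fun p : Σ _ : ι, β => g p.2)]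
  exact Finset.sum_image_le_of_nonneg fun b _ => hg b

/-- Splitting off the shortest border: unbordered words contribute at most `σⁿ` in total, and each
bordered word `U V U` contributes at most `e^{2t|U|}` times the contribution of `V`. -/
lemma moment_rec (Γ : Type) [Fintype Γ] {t : ℝ} (ht : 0 ≤ t) (n : ℕ) :
    ∑ S ∈ words Γ n, wt t S ≤ (Fintype.card Γ : ℝ) ^ n +
      ∑ k ∈ range (n / 2), candCount (Fintype.card Γ) k *
        (Real.exp (2 * t) ^ (k + 1) * ∑ V ∈ words Γ (n - 2 * (k + 1)), wt t V) := by
  classical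
  have hpos : ∀ S : List Γ, 0 ≤ wt t S := fun S => (Real.exp_pos _).le
  rw [← Finset.sum_filter_add_sum_filter_not (words Γ n) (fun S => Unbordered S)]
  refine add_le_add ?_ ?_
  · calc ∑ S ∈ (words Γ n).filter (fun S => Unbordered S), wt t S
        ≤ ∑ S ∈ (words Γ n).filter (fun S => Unbordered S), (1 : ℝ) := by
          refine Finset.sum_le_sum fun S hS => ?_
          have := maxUnb_of_unbordered S (Finset.mem_filter.1 hS).2
          simp [wt, Nat.sub_eq_zero_of_le this]
      _ ≤ ∑ S ∈ words Γ n, (1 : ℝ) :=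
          Finset.sum_le_sum_of_subset_of_nonneg (Finset.filter_subset _ _)
            (fun _ _ _ => zero_le_one)
      _ = _ := by simp [card_words]
  · have hsub : (words Γ n).filter (fun S => ¬ Unbordered S) ⊆
        (range (n / 2)).biUnion fun k =>
          (cands Γ k ×ˢ words Γ (n - 2 * (k + 1))).image fun p => p.1 ++ p.2 ++ p.1 := by
      intro S hS
      obtain ⟨hS, hu⟩ := Finset.mem_filter.1 hS
      have hlen := mem_words.1 hS
      obtain ⟨U, V, rfl, hU⟩ := exists_decomp S hu
      simp only [List.length_append] at hlen
      have key : ∃ k, U ∈ cands Γ k := by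
        rcases hU with h1 | ⟨a, T, b, hab, rfl⟩
        · exact ⟨0, mem_words.2 h1⟩
        · refine ⟨T.length + 1, Finset.mem_image.2 ⟨((a, b), T), ?_, rfl⟩⟩
          simp [hab, mem_words]
      obtain ⟨k, hk⟩ := key
      have hUk := length_of_mem_cands hk
      refine Finset.mem_biUnion.2 ⟨k, Finset.mem_range.2 (by omega),
        Finset.mem_image.2 ⟨(U, V), ?_, rfl⟩⟩
      exact Finset.mem_product.2 ⟨hk, mem_words.2 (by simp only; omega)⟩
    calc _ ≤ _ := Finset.sum_le_sum_of_subset_of_nonneg hsub (fun S _ _ => hpos S)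
      _ ≤ ∑ k ∈ range (n / 2), ∑ S ∈ (cands Γ k ×ˢ words Γ (n - 2 * (k + 1))).image
            (fun p => p.1 ++ p.2 ++ p.1), wt t S :=
          sum_biUnion_le hpos _ _
      _ ≤ _ := by
          refine Finset.sum_le_sum fun k _ => ?_
          calc _ ≤ ∑ p ∈ cands Γ k ×ˢ words Γ (n - 2 * (k + 1)), wt t (p.1 ++ p.2 ++ p.1) :=
                Finset.sum_image_le_of_nonneg fun S _ => hpos S
            _ ≤ ∑ p ∈ cands Γ k ×ˢ words Γ (n - 2 * (k + 1)),
                  Real.exp (2 * t) ^ (k + 1) * wt t p.2 := by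
                refine Finset.sum_le_sum fun p hp => ?_
                rw [← length_of_mem_cands (Finset.mem_product.1 hp).1]
                exact wt_append_le ht _ _
            _ = (cands Γ k).card * (Real.exp (2 * t) ^ (k + 1) *
                  ∑ V ∈ words Γ (n - 2 * (k + 1)), wt t V) := by
                rw [Finset.sum_product]
                simp [Finset.mul_sum]
            _ ≤ _ := by
                refine mul_le_mul_of_nonneg_right (card_cands_le Γ k) ?_
                exact mul_nonneg (by positivity) (Finset.sum_nonneg fun S _ => hpos S)

/-! ### Numerical estimates -/

lemma denom_pos {s : ℕ} (hs : 2 ≤ s) {q : ℝ} (hq1 : 1 ≤ q) (hq : q ^ 5 ≤ s) :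
    q < s ∧ 0 < (s : ℝ) ^ 3 - 2 * (s : ℝ) ^ 2 * q + q ^ 2 := by
  rcases Nat.lt_or_ge s 3 with h | h
  · obtain rfl : s = 2 := by omega
    have hq' : q < 1.15 := by
      by_contra hc
      have := pow_le_pow_left₀ (by norm_num) (not_lt.1 hc) 5
      norm_num at this hq
      linarith
    norm_num at hq' ⊢
    constructor <;> nlinarith
  · have h3 : (3 : ℝ) ≤ s := by exact_mod_cast h
    have hq' : q < s / 2 := by
      by_contra hc
      have h5 := pow_le_pow_left₀ (by positivity) (not_lt.1 hc) 5
      have h4 := pow_le_pow_left₀ (by norm_num) h3 4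
      have : (s : ℝ) * 3 ^ 4 ≤ s * (s : ℝ) ^ 4 := by gcongr
      have e : ((s : ℝ) / 2) ^ 5 = s * (s : ℝ) ^ 4 / 32 := by ring
      rw [e] at h5
      linarith
    refine ⟨by linarith, ?_⟩
    have : 0 < (s : ℝ) ^ 2 * (s - 2 * q) := mul_pos (by positivity) (by linarith)
    nlinarith

lemma sum_candCount_le {s q : ℝ} (hs : 1 ≤ s) (hq : 0 < q) (hqs : q < s) (N : ℕ) :
    ∑ k ∈ range N, candCount s k * q ^ (k + 1) / s ^ (2 * (k + 1)) ≤
      q * (s ^ 2 - q) / (s ^ 2 * (s - q)) := by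
  have hs0 : 0 < s := by linarith
  have hd : 0 < s - q := by linarith
  have hsq : 0 ≤ s ^ 2 - q := by nlinarith
  -- The partial sums are geometric; the explicit remainder makes the induction close.
  have key : ∀ N : ℕ, ∑ k ∈ range (N + 1), candCount s k * q ^ (k + 1) / s ^ (2 * (k + 1)) =
      q * (s ^ 2 - q) / (s ^ 2 * (s - q)) - (s - 1) * (q / s) ^ (N + 2) / (s - q) := by
    intro N
    induction N with
    | zero =>
      simp [candCount]
      field_simp
      ring
    | succ N ih =>
      rw [Finset.sum_range_succ, ih]
      simp only [candCount, div_pow]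
      field_simp
      ring
  cases N with
  | zero =>
    simp only [Finset.range_zero, Finset.sum_empty]
    positivity
  | succ N =>
    rw [key N]
    have : 0 ≤ (s - 1) * (q / s) ^ (N + 2) / (s - q) :=
      div_nonneg (mul_nonneg (by linarith) (by positivity)) hd.le
    linarith

/-- The exponential moment bound `∑_S e^{t(n - L(S))} ≤ C(t) σⁿ`. -/
lemma moment_bound (Γ : Type) [Fintype Γ] (hσ : 2 ≤ Fintype.card Γ) {t : ℝ} (ht : 0 ≤ t)
    {s q : ℝ} (hs : s = Fintype.card Γ) (hq : q = Real.exp (2 * t)) (hqs : q < s)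
    (hden : 0 < s ^ 3 - 2 * s ^ 2 * q + q ^ 2) (n : ℕ) :
    ∑ S ∈ words Γ n, wt t S ≤
      (s ^ 3 - s ^ 2 * q) / (s ^ 3 - 2 * s ^ 2 * q + q ^ 2) * s ^ n := by
  have hs2 : 2 ≤ s := by rw [hs]; exact_mod_cast hσ
  have hs0 : 0 < s := by linarith
  have hq0 : 0 < q := by rw [hq]; exact Real.exp_pos _
  have hd : 0 < s - q := by linarith
  have hnum : 0 < s ^ 3 - s ^ 2 * q := by
    have : 0 < s ^ 2 * (s - q) := by positivity
    linarith
  set C := (s ^ 3 - s ^ 2 * q) / (s ^ 3 - 2 * s ^ 2 * q + q ^ 2) with hC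
  have hC0 : 0 < C := div_pos hnum hden
  -- The fixed-point identity `1 + M C = C`.
  have hfix : 1 + q * (s ^ 2 - q) / (s ^ 2 * (s - q)) * C = C := by
    rw [hC, show s ^ 3 - s ^ 2 * q = s ^ 2 * (s - q) by ring]
    generalize hD : s ^ 3 - 2 * s ^ 2 * q + q ^ 2 = D at hden
    have h1 := hden.ne'
    have h2 := hd.ne'
    field_simp
    rw [← hD]
    ring
  induction n using Nat.strong_induction_on with
  | _ n ih =>
    have hcc : ∀ k, 0 ≤ candCount s k := by
      intro k
      cases k with
      | zero => exact hs0.le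
      | succ k => exact mul_nonneg (by nlinarith) (by positivity)
    have hrec := moment_rec Γ ht n
    rw [← hs, ← hq] at hrec
    refine hrec.trans ?_
    calc _ ≤ s ^ n + ∑ k ∈ range (n / 2),
          candCount s k * q ^ (k + 1) / s ^ (2 * (k + 1)) * (C * s ^ n) := by
          refine add_le_add le_rfl (Finset.sum_le_sum fun k hk => ?_)
          have hk' : 2 * (k + 1) ≤ n := by
            have := Finset.mem_range.1 hk
            omega
          have hI := ih (n - 2 * (k + 1)) (by omega)
          have hsp : s ^ n = s ^ (n - 2 * (k + 1)) * s ^ (2 * (k + 1)) := by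
            rw [← pow_add]
            congr 1
            omega
          calc _ ≤ candCount s k * (q ^ (k + 1) * (C * s ^ (n - 2 * (k + 1)))) := by
                have := hcc k
                gcongr
            _ = _ := by
                rw [hsp]
                field_simp
      _ = s ^ n + (∑ k ∈ range (n / 2),
          candCount s k * q ^ (k + 1) / s ^ (2 * (k + 1))) * (C * s ^ n) := by
          rw [Finset.sum_mul]
      _ ≤ s ^ n + q * (s ^ 2 - q) / (s ^ 2 * (s - q)) * (C * s ^ n) := by
          gcongr
          exact sum_candCount_le (by linarith) hq0 hqs _
      _ = (1 + q * (s ^ 2 - q) / (s ^ 2 * (s - q)) * C) * s ^ n := by ring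
      _ = C * s ^ n := by rw [hfix]

/-- for a uniformly random `S ∈ Σⁿ` over an alphabet of size `σ ≥ 2`, every
`ℓ ≥ 0`, and every `0 ≤ t ≤ 0.1 ln σ`, we have `P[n - L(S) ≥ ℓ] ≤ C(t)·e^{-tℓ}`. -/
theorem tail_bound (σ : ℕ) (hσ : 2 ≤ σ) (Γ : Type) [Fintype Γ]
    (hcard : Fintype.card Γ = σ) (n ℓ : ℕ) (t : ℝ)
    (ht0 : 0 ≤ t) (ht1 : t ≤ 0.1 * Real.log σ) :
    (((univ.filter fun S : Fin n → Γ => ℓ ≤ n - maxUnb (List.ofFn S)).card : ℝ)) / (σ : ℝ) ^ n ≤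
      ((σ : ℝ) ^ 3 - (σ : ℝ) ^ 2 * Real.exp (2 * t)) /
          ((σ : ℝ) ^ 3 - 2 * (σ : ℝ) ^ 2 * Real.exp (2 * t) + Real.exp (4 * t)) *
        Real.exp (-t * ℓ) := by
  have hs : (2 : ℝ) ≤ σ := by exact_mod_cast hσ
  have hs0 : (0 : ℝ) < σ := by linarith
  have hq1 : 1 ≤ Real.exp (2 * t) := Real.one_le_exp (by linarith)
  have hq5 : Real.exp (2 * t) ^ 5 ≤ σ := by
    rw [← Real.exp_nat_mul, ← Real.le_log_iff_exp_le hs0]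
    push_cast
    linarith
  have h4 : Real.exp (4 * t) = Real.exp (2 * t) ^ 2 := by
    rw [← Real.exp_nat_mul]
    congr 1
    push_cast
    ring
  obtain ⟨hqs, hden⟩ := denom_pos hσ hq1 hq5
  have hmom := moment_bound Γ (by omega) ht0 (by rw [hcard]) rfl hqs hden n
  rw [h4, div_le_iff₀ (by positivity)]
  -- Markov's inequality for the exponential moment.
  have hmarkov : ((univ.filter fun S : Fin n → Γ => ℓ ≤ n - maxUnb (List.ofFn S)).card : ℝ) *
      Real.exp (t * ℓ) ≤ ∑ S ∈ words Γ n, wt t S := by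
    rw [← nsmul_eq_mul, words, Finset.sum_map]
    calc _ ≤ ∑ S ∈ univ.filter fun S : Fin n → Γ => ℓ ≤ n - maxUnb (List.ofFn S),
          wt t (List.ofFn S) := by
          refine Finset.card_nsmul_le_sum _ _ _ fun S hS => ?_
          have hS' := (Finset.mem_filter.1 hS).2
          unfold wt
          rw [List.length_ofFn]
          gcongr
      _ ≤ _ := Finset.sum_le_sum_of_subset_of_nonneg (Finset.filter_subset _ _)
          fun S _ _ => (Real.exp_pos _).le
  have he : Real.exp (-t * ℓ) = (Real.exp (t * ℓ))⁻¹ := by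
    rw [← Real.exp_neg]
    congr 1
    ring
  rw [he, mul_right_comm, ← div_eq_mul_inv, le_div_iff₀ (Real.exp_pos _)]
  exact hmarkov.trans hmom
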